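/- Let V : ℤ → ℝ be p-periodic (p ≥ 1) with Schrödinger operator H. For every μ > 0 there exists M ∈ ℕ such that for every real E with (E : ℂ) ∈ σ(H) and every N ≥ M, one has (1/N)·log‖A_N(E,V)‖ ≤ μ. -/

import Mathlib

open Filter Matrix

/-- The transfer matrix `A_N(E,V) = ∏_{n=1}^N [[E − V(N−n), −1],[1,0]]`,
with the `n = 1` factor leftmost. -/
noncomputable def transferMatrix (V : ℤ → ℝ) (E : ℝ) (N : ℕ) : Matrix (Fin 2) (Fin 2) ℝ :=
  (((List.range N).map
    (fun n => !![E - V ((N : ℤ) - ((n : ℤ) + 1)), -1; (1 : ℝ), 0])).prod)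

/-- Operator norm (Euclidean, i.e. ℓ²→ℓ²) of a 2×2 real matrix. -/
noncomputable def opNorm (A : Matrix (Fin 2) (Fin 2) ℝ) : ℝ :=
  ‖LinearMap.toContinuousLinearMap (Matrix.toEuclideanLin A)‖

/-- `H` is a Schrödinger operator on `ℓ²(ℤ,ℂ)` with potential `V`. -/
def IsSchrodingerOp (V : ℤ → ℝ)
    (H : lp (fun _ : ℤ => ℂ) 2 →L[ℂ] lp (fun _ : ℤ => ℂ) 2) : Prop :=
  ∀ ψ : lp (fun _ : ℤ => ℂ) 2, ∀ n : ℤ,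
    H ψ n = ψ (n + 1) + ψ (n - 1) + (V n : ℂ) * ψ n

/-- `V` is `p`-periodic. -/
def IsPeriodic (V : ℤ → ℝ) (p : ℕ) : Prop :=
  ∀ n : ℤ, V (n + (p : ℤ)) = V n

/-- `V` is limit-periodic: a uniform limit of periodic potentials. -/
def IsLimitPeriodic (V : ℤ → ℝ) : Prop :=
  ∃ (W : ℕ → ℤ → ℝ) (p : ℕ → ℕ),
    (∀ k, 1 ≤ p k ∧ IsPeriodic (W k) (p k)) ∧
    (∀ ε > (0 : ℝ), ∃ K : ℕ, ∀ k ≥ K, ∀ n : ℤ, |V n - W k n| ≤ ε)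

/-- `(1/N)·log‖A_N(E,V)‖`. -/
noncomputable def logNormRate (V : ℤ → ℝ) (E : ℝ) (N : ℕ) : ℝ :=
  (1 / (N : ℝ)) * Real.log (opNorm (transferMatrix V E N))

/-- Individual (upper) Lyapunov exponent `limsup_N (1/N) log‖A_N(E,V)‖`. -/
noncomputable def lyapExp (V : ℤ → ℝ) (E : ℝ) : ℝ :=
  Filter.limsup (fun N : ℕ => logNormRate V E N) Filter.atTop

/-- Bottom of the (real trace of the) spectrum of `H`. -/
noncomputable def specInf (H : lp (fun _ : ℤ => ℂ) 2 →L[ℂ] lp (fun _ : ℤ => ℂ) 2) : ℝ :=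
  sInf {x : ℝ | (x : ℂ) ∈ spectrum ℂ H}

/-!
Let `Δ` be the trace of the transfer matrix over one period, a polynomial in the energy. By
Cayley–Hamilton, every solution of a `p`-periodic recurrence `u (n + 1) + u (n - 1) = v n * u n`
satisfies `u (n + p) + u (n - p) = Δ * u n`. The coordinates of `ψ`, as functionals on which `H`
acts by transposition, solve the recurrence with the operator `H` in place of the energy, so `Δ(H)`
is the sum of the shifts by `p` and `-p` and has norm at most `2`. By the spectral mapping theorem,
`|Δ(E)| ≤ 2` on the spectrum.

A matrix `A` of determinant `1` and trace `t` has powers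
`A ^ (n + 1) = S n (t) • A - S (n - 1) (t) • 1`, with `S` the rescaled Chebyshev polynomials of the
second kind, and `|S n (t)| ≤ n + 1` for `|t| ≤ 2`. So on the spectrum the transfer matrices grow at
most linearly in `N`, uniformly in `E` because the spectrum is compact.
-/

section ChebyshevGrowth

open Polynomial

theorem abs_eval_chebyshevU_le {x : ℝ} (hx : |x| ≤ 1) (n : ℕ) :
    |(Chebyshev.U ℝ n).eval x| ≤ n + 1 := by
  induction n with
  | zero => simp
  | succ n ih =>
    have hrec : (Chebyshev.U ℝ (n + 1 : ℕ)).eval x =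
        x * (Chebyshev.U ℝ n).eval x + (Chebyshev.T ℝ (n + 1)).eval x := by
      rw [Nat.cast_succ, Chebyshev.U_eq_X_mul_U_add_T, eval_add, eval_mul, eval_X]
    calc |(Chebyshev.U ℝ (n + 1 : ℕ)).eval x|
        ≤ |x| * |(Chebyshev.U ℝ n).eval x| + |(Chebyshev.T ℝ (n + 1)).eval x| := by
          rw [hrec, ← abs_mul]
          exact abs_add_le _ _
      _ ≤ 1 * (n + 1) + 1 := by
          gcongr
          exact Chebyshev.abs_eval_T_real_le_one _ hx
      _ = (n + 1 : ℕ) + 1 := by push_cast; ring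

theorem abs_eval_chebyshevS_le {t : ℝ} (ht : |t| ≤ 2) (n : ℕ) :
    |(Chebyshev.S ℝ n).eval t| ≤ n + 1 := by
  have hhalf : |t / 2| ≤ 1 := by
    rw [abs_div, abs_two]
    linarith
  convert abs_eval_chebyshevU_le hhalf n using 2
  rw [← Chebyshev.S_comp_two_mul_X, eval_comp]
  congr 1
  simp only [eval_mul, eval_ofNat, eval_X]
  ring

theorem pow_succ_eq_chebyshevS {R A : Type*} [CommRing R] [Ring A] [Algebra R A] {a : A} {t : R}
    (ha : a ^ 2 = t • a - 1) (n : ℕ) :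
    a ^ (n + 1) =
      (Chebyshev.S R n).eval t • a - (Chebyshev.S R (n - 1)).eval t • (1 : A) := by
  induction n with
  | zero => simp
  | succ n ih =>
    have hrec : (Chebyshev.S R (n + 1)).eval t =
        t * (Chebyshev.S R n).eval t - (Chebyshev.S R (n - 1)).eval t := by
      rw [Chebyshev.S_add_one, eval_sub, eval_mul, eval_X]
    rw [pow_succ, ih, sub_mul, smul_mul_assoc, smul_mul_assoc, one_mul, ← pow_two, ha,
      Nat.cast_succ, add_sub_cancel_right, hrec]
    module

theorem norm_pow_le_of_sq_eq_smul_sub_one {A : Type*} [NormedRing A] [NormedAlgebra ℝ A] {a : A}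
    {t : ℝ} (ha : a ^ 2 = t • a - 1) (ht : |t| ≤ 2) (n : ℕ) :
    ‖a ^ n‖ ≤ ‖(1 : A)‖ + n * (‖a‖ + ‖(1 : A)‖) := by
  have hprev (n : ℕ) : |(Chebyshev.S ℝ (n - 1)).eval t| ≤ n := by
    cases n with
    | zero => simp
    | succ n => simpa using abs_eval_chebyshevS_le ht n
  cases n with
  | zero => simp
  | succ n =>
    calc ‖a ^ (n + 1)‖
        ≤ |(Chebyshev.S ℝ n).eval t| * ‖a‖ + |(Chebyshev.S ℝ (n - 1)).eval t| * ‖(1 : A)‖ := by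
          rw [pow_succ_eq_chebyshevS ha, ← Real.norm_eq_abs, ← Real.norm_eq_abs, ← norm_smul,
            ← norm_smul]
          exact norm_sub_le _ _
      _ ≤ (n + 1) * ‖a‖ + n * ‖(1 : A)‖ := by
          gcongr
          exacts [abs_eval_chebyshevS_le ht n, hprev n]
      _ ≤ ‖(1 : A)‖ + (n + 1 : ℕ) * (‖a‖ + ‖(1 : A)‖) := by
          push_cast
          linarith [norm_nonneg (1 : A)]

end ChebyshevGrowth

theorem sq_eq_trace_smul_sub_det_smul_one {R : Type*} [CommRing R] (M : Matrix (Fin 2) (Fin 2) R) :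
    M ^ 2 = M.trace • M - M.det • (1 : Matrix (Fin 2) (Fin 2) R) := by
  nontriviality R
  have h := M.aeval_self_charpoly
  rw [charpoly_fin_two] at h
  simp only [map_add, map_sub, map_mul, map_pow, Polynomial.aeval_X, Polynomial.aeval_C,
    Algebra.algebraMap_eq_smul_one] at h
  rw [← sub_eq_zero, ← h, smul_mul_assoc, one_mul]
  abel

section Cocycle

variable {R S : Type*} [CommRing R] [CommRing S]

/-- The one-step transfer matrix of the recurrence `u (n + 1) + u (n - 1) = x * u n`; in the
notation of the theorem, `x = E - V n`. -/
def schrodingerStep (x : R) : Matrix (Fin 2) (Fin 2) R :=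
  !![x, -1; 1, 0]

/-- The product `schrodingerStep (v (n + k - 1)) * ⋯ * schrodingerStep (v n)`, which carries the
Cauchy data at site `n` to the Cauchy data at site `n + k`. The coefficients lie in an arbitrary
ring so that the energy may be the polynomial variable as well as a real number. -/
def schrodingerCocycle (v : ℤ → R) (n : ℤ) : ℕ → Matrix (Fin 2) (Fin 2) R
  | 0 => 1
  | k + 1 => schrodingerStep (v (n + k)) * schrodingerCocycle v n k

@[simp]
theorem schrodingerCocycle_zero (v : ℤ → R) (n : ℤ) : schrodingerCocycle v n 0 = 1 := rfl

theorem schrodingerCocycle_succ (v : ℤ → R) (n : ℤ) (k : ℕ) :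
    schrodingerCocycle v n (k + 1) = schrodingerStep (v (n + k)) * schrodingerCocycle v n k := rfl

theorem schrodingerCocycle_add (v : ℤ → R) (n : ℤ) (j k : ℕ) :
    schrodingerCocycle v n (j + k) = schrodingerCocycle v (n + j) k * schrodingerCocycle v n j := by
  induction k with
  | zero => simp
  | succ k ih =>
    rw [← add_assoc, schrodingerCocycle_succ, schrodingerCocycle_succ, ih, mul_assoc, Nat.cast_add,
      add_assoc]

theorem det_schrodingerCocycle (v : ℤ → R) (n : ℤ) (k : ℕ) :
    (schrodingerCocycle v n k).det = 1 := by
  induction k with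
  | zero => simp
  | succ k ih =>
    rw [schrodingerCocycle_succ, det_mul, ih, schrodingerStep, det_fin_two_of]
    ring

theorem sq_schrodingerCocycle (v : ℤ → R) (n : ℤ) (k : ℕ) :
    schrodingerCocycle v n k ^ 2 =
      (schrodingerCocycle v n k).trace • schrodingerCocycle v n k - 1 := by
  rw [sq_eq_trace_smul_sub_det_smul_one, det_schrodingerCocycle, one_smul]

theorem map_schrodingerCocycle (f : R →+* S) (v : ℤ → R) (n : ℤ) (k : ℕ) :
    (schrodingerCocycle v n k).map f = schrodingerCocycle (fun m => f (v m)) n k := by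
  induction k with
  | zero => simp
  | succ k ih =>
    have hstep (x : R) : (schrodingerStep x).map f = schrodingerStep (f x) := by
      ext i j
      fin_cases i <;> fin_cases j <;> simp [schrodingerStep]
    rw [schrodingerCocycle_succ, schrodingerCocycle_succ, Matrix.map_mul, ih, hstep]

variable {v : ℤ → R} {p : ℕ}

theorem schrodingerCocycle_periodic (hv : Function.Periodic v p) (k : ℕ) :
    Function.Periodic (fun n => schrodingerCocycle v n k) p := by
  intro n
  induction k with
  | zero => rfl
  | succ k ih => simp only [schrodingerCocycle_succ, ih, add_right_comm n (p : ℤ), hv (n + k)]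

theorem schrodingerCocycle_add_period (hv : Function.Periodic v p) (n : ℤ) (k : ℕ) :
    schrodingerCocycle v (n + p) k = schrodingerCocycle v n k :=
  schrodingerCocycle_periodic hv k n

theorem schrodingerCocycle_add_mul_period (hv : Function.Periodic v p) (n : ℤ) (r k : ℕ) :
    schrodingerCocycle v n (r + k * p) =
      schrodingerCocycle v n r * schrodingerCocycle v n p ^ k := by
  induction k with
  | zero => simp
  | succ k ih =>
    rw [show r + (k + 1) * p = p + (r + k * p) by ring, schrodingerCocycle_add,
      schrodingerCocycle_add_period hv, ih, pow_succ, mul_assoc]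

theorem trace_schrodingerCocycle_periodic_one (hv : Function.Periodic v p) :
    Function.Periodic (fun n => (schrodingerCocycle v n p).trace) 1 := by
  intro n
  cases p with
  | zero => rfl
  | succ q =>
    have hlast : schrodingerCocycle v (n + 1) (q + 1) =
        schrodingerStep (v n) * schrodingerCocycle v (n + 1) q := by
      rw [schrodingerCocycle_succ, ← hv n, Nat.cast_succ, add_right_comm, add_assoc n]
    have hfirst : schrodingerCocycle v n (q + 1) =
        schrodingerCocycle v (n + 1) q * schrodingerStep (v n) := by
      rw [add_comm q, schrodingerCocycle_add, schrodingerCocycle_succ, schrodingerCocycle_zero,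
        mul_one, Nat.cast_zero, add_zero, Nat.cast_one]
    simp only [hlast, hfirst, trace_mul_comm (schrodingerStep (v n))]

theorem trace_schrodingerCocycle_eq (hv : Function.Periodic v p) (n : ℤ) :
    (schrodingerCocycle v n p).trace = (schrodingerCocycle v 0 p).trace := by
  simpa using (trace_schrodingerCocycle_periodic_one hv).int_mul_eq n

end Cocycle

section SolutionFunctionals

open scoped Matrix.Module

variable {R M G : Type*} [CommRing R] [AddCommGroup M] [Module R M] [AddCommGroup G]
  {v : ℤ → R} {p : ℕ} {u : ℤ → M →+ G}

/-- The pairing of the Cauchy data `(u n, u (n - 1))` of a sequence `u` of functionals with a vector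
`w`; it turns the recurrence for `u` into a first-order system. -/
def cauchyPairing (u : ℤ → M →+ G) (n : ℤ) : (Fin 2 → M) →+ G :=
  (u n).comp (Pi.evalAddMonoidHom _ 0) + (u (n - 1)).comp (Pi.evalAddMonoidHom _ 1)

theorem cauchyPairing_apply (u : ℤ → M →+ G) (n : ℤ) (w : Fin 2 → M) :
    cauchyPairing u n w = u n (w 0) + u (n - 1) (w 1) := rfl

-- The transpose appears because the coefficients act on the argument of the functionals.
theorem cauchyPairing_add (hu : ∀ n x, u (n + 1) x + u (n - 1) x = u n (v n • x))
    (n : ℤ) (k : ℕ) (w : Fin 2 → M) :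
    cauchyPairing u (n + k) w = cauchyPairing u n ((schrodingerCocycle v n k)ᵀ • w) := by
  have hstep (m : ℤ) (w : Fin 2 → M) :
      cauchyPairing u (m + 1) w = cauchyPairing u m ((schrodingerStep (v m))ᵀ • w) := by
    simp only [cauchyPairing_apply, Matrix.Module.smul_apply, Fin.sum_univ_two, schrodingerStep,
      transpose_apply, of_apply, cons_val', cons_val_zero, cons_val_one, cons_val_fin_one,
      one_smul, zero_smul, add_zero, neg_smul, map_add, map_neg, add_sub_cancel_right, ← hu]
    abel
  induction k generalizing w with
  | zero => simp
  | succ k ih =>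
    rw [Nat.cast_succ, ← add_assoc, hstep, ih, smul_smul, ← transpose_mul, schrodingerCocycle_succ]

theorem apply_add_period_add_apply_sub_period (hv : Function.Periodic v p)
    (hu : ∀ n x, u (n + 1) x + u (n - 1) x = u n (v n • x)) (n : ℤ) (x : M) :
    u (n + p) x + u (n - p) x = u n ((schrodingerCocycle v 0 p).trace • x) := by
  obtain ⟨m, rfl⟩ : ∃ m : ℤ, n = m + p := ⟨n - p, (sub_add_cancel n p).symm⟩
  set A := schrodingerCocycle v m p
  have hsq : Aᵀ * Aᵀ = A.trace • Aᵀ - 1 := by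
    rw [← transpose_mul, ← pow_two, sq_schrodingerCocycle, transpose_sub, transpose_smul,
      transpose_one]
  have hpairing : cauchyPairing u (m + p + p) ![x, 0] + cauchyPairing u m ![x, 0] =
      cauchyPairing u (m + p) (A.trace • ![x, 0]) := by
    rw [cauchyPairing_add hu, schrodingerCocycle_add_period hv, cauchyPairing_add hu,
      cauchyPairing_add hu, smul_smul, hsq, sub_smul, one_smul, smul_assoc, smul_comm, map_sub,
      sub_add_cancel]
  simpa [cauchyPairing_apply, A, trace_schrodingerCocycle_eq hv] using hpairing

end SolutionFunctionals

section Reindex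

open scoped ENNReal

variable {α β E : Type*} [NormedAddCommGroup E] {q : ℝ≥0∞}

theorem memℓp_comp_equiv (e : α ≃ β) {f : β → E} (hf : Memℓp f q) : Memℓp (f ∘ e) q := by
  rcases q.trichotomy with rfl | rfl | hq
  · exact memℓp_zero (hf.finite_dsupport.preimage e.injective.injOn)
  · exact memℓp_infty (hf.bddAbove.mono (Set.range_comp_subset_range e fun i => ‖f i‖))
  · exact memℓp_gen (e.summable_iff.mpr (hf.summable hq))

/-- Reindexing of an `ℓ^q` sequence along a bijection; the translations of `ℤ` give the shifts. -/
def lpReindex (e : α ≃ β) (f : lp (fun _ : β => E) q) : lp (fun _ : α => E) q :=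
  ⟨f ∘ e, memℓp_comp_equiv e (lp.memℓp f)⟩

@[simp]
theorem lpReindex_apply (e : α ≃ β) (f : lp (fun _ : β => E) q) (i : α) :
    lpReindex e f i = f (e i) := rfl

theorem norm_lpReindex (e : α ≃ β) (f : lp (fun _ : β => E) q) : ‖lpReindex e f‖ = ‖f‖ := by
  rcases q.trichotomy with rfl | rfl | hq
  · simp only [lp.norm_eq_card_dsupport]
    exact_mod_cast Finset.card_equiv e fun i => by simp
  · rw [lp.norm_eq_ciSup, lp.norm_eq_ciSup]
    exact e.iSup_comp (g := fun i => ‖f i‖)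
  · rw [lp.norm_eq_tsum_rpow hq, lp.norm_eq_tsum_rpow hq]
    congr 1
    exact e.tsum_eq fun i => ‖f i‖ ^ q.toReal

end Reindex

section Discriminant

open Polynomial

local notation "ℓ²" => lp (fun _ : ℤ => ℂ) 2

/-- The discriminant of a `p`-periodic potential: the trace of the transfer matrix over one period,
as a polynomial in the energy. -/
noncomputable def discriminant {R : Type*} [CommRing R] (V : ℤ → R) (p : ℕ) : R[X] :=
  (schrodingerCocycle (fun n => X - C (V n)) 0 p).trace

theorem eval_discriminant {R : Type*} [CommRing R] (V : ℤ → R) (p : ℕ) (E : R) :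
    (discriminant V p).eval E = (schrodingerCocycle (fun n => E - V n) 0 p).trace := by
  have h := map_schrodingerCocycle (evalRingHom E) (fun n => X - C (V n)) 0 p
  simp only [coe_evalRingHom, eval_sub, eval_X, eval_C] at h
  rw [← h, discriminant, ← coe_evalRingHom]
  exact AddMonoidHom.map_trace (evalRingHom E).toAddMonoidHom _

variable {V : ℤ → ℝ} {p : ℕ} {H : ℓ² →L[ℂ] ℓ²}

theorem aeval_discriminant_apply (hV : Function.Periodic V p) (hH : IsSchrodingerOp V H) (ψ : ℓ²)
    (n : ℤ) :
    aeval H (discriminant V p) ψ n = ψ (n + p) + ψ (n - p) := by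
  have : IsScalarTower ℝ (ℓ² →L[ℂ] ℓ²) ℓ² :=
    ⟨fun c T φ => algebraMap_smul ℂ c (T φ)⟩
  let u (n : ℤ) : Module.AEval ℝ ℓ² H →+ ℂ :=
    { toFun := fun x => (Module.AEval.of ℝ ℓ² H).symm x n
      map_zero' := by simp
      map_add' := by simp }
  have hv : Function.Periodic (fun n => X - C (V n)) (p : ℤ) := hV.comp (X - C ·)
  have hu (n : ℤ) (x : Module.AEval ℝ ℓ² H) :
      u (n + 1) x + u (n - 1) x = u n ((X - C (V n)) • x) := by
    set φ := (Module.AEval.of ℝ ℓ² H).symm x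
    have hsmul : (Module.AEval.of ℝ ℓ² H).symm ((X - C (V n)) • x) = H φ - V n • φ := by
      rw [sub_smul, map_sub, Module.AEval.of_symm_X_smul, Module.AEval.C_smul, map_smul,
        ContinuousLinearMap.smul_def]
    calc φ (n + 1) + φ (n - 1) = H φ n - V n * φ n := by rw [hH, add_sub_cancel_right]
      _ = (Module.AEval.of ℝ ℓ² H).symm ((X - C (V n)) • x) n := by
        rw [hsmul, lp.coeFn_sub, Pi.sub_apply, lp.coeFn_smul, Pi.smul_apply, Complex.real_smul]
  exact (apply_add_period_add_apply_sub_period hv hu n (Module.AEval.of ℝ ℓ² H ψ)).symm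

theorem norm_aeval_discriminant_le (hV : Function.Periodic V p) (hH : IsSchrodingerOp V H) :
    ‖aeval H (discriminant V p)‖ ≤ 2 := by
  refine ContinuousLinearMap.opNorm_le_bound _ zero_le_two fun ψ => ?_
  have hshift : aeval H (discriminant V p) ψ =
      lpReindex (Equiv.addRight (p : ℤ)) ψ + lpReindex (Equiv.subRight (p : ℤ)) ψ := by
    ext n
    exact aeval_discriminant_apply hV hH ψ n
  calc ‖aeval H (discriminant V p) ψ‖
      ≤ ‖lpReindex (Equiv.addRight (p : ℤ)) ψ‖ + ‖lpReindex (Equiv.subRight (p : ℤ)) ψ‖ :=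
        hshift ▸ norm_add_le _ _
    _ = 2 * ‖ψ‖ := by rw [norm_lpReindex, norm_lpReindex, two_mul]

theorem abs_trace_schrodingerCocycle_le_two (hV : Function.Periodic V p)
    (hH : IsSchrodingerOp V H) {E : ℝ} (hE : E ∈ spectrum ℝ H) :
    |(schrodingerCocycle (fun n => E - V n) 0 p).trace| ≤ 2 := by
  have hΔ : (discriminant V p).eval E ∈ spectrum ℝ (aeval H (discriminant V p)) :=
    spectrum.subset_polynomial_aeval H _ ⟨E, hE, rfl⟩
  calc |(schrodingerCocycle (fun n => E - V n) 0 p).trace|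
      ≤ ‖aeval H (discriminant V p)‖ * ‖(1 : ℓ² →L[ℂ] ℓ²)‖ := by
        rw [← eval_discriminant]
        exact spectrum.norm_le_norm_mul_of_mem hΔ
    _ ≤ 2 * 1 := by
        gcongr
        exacts [norm_aeval_discriminant_le hV hH, ContinuousLinearMap.norm_id_le]
    _ = 2 := mul_one 2

end Discriminant

section Growth

open scoped Matrix.Norms.L2Operator

theorem norm_schrodingerCocycle_le {v : ℤ → ℝ} {p : ℕ} (hp : 0 < p) (hv : Function.Periodic v p)
    {n : ℤ} (htrace : |(schrodingerCocycle v n p).trace| ≤ 2) {C : ℝ}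
    (hC : ∀ r ≤ p, ‖schrodingerCocycle v n r‖ ≤ C) (N : ℕ) :
    ‖schrodingerCocycle v n N‖ ≤ C + C * (C + 1) * N := by
  have hC₀ : 0 ≤ C := (norm_nonneg _).trans (hC p le_rfl)
  have hpow : ‖schrodingerCocycle v n p ^ (N / p)‖ ≤ 1 + N * (C + 1) := by
    refine (norm_pow_le_of_sq_eq_smul_sub_one (sq_schrodingerCocycle v n p) htrace _).trans ?_
    rw [CStarRing.norm_one]
    gcongr
    exacts [Nat.div_le_self N p, hC p le_rfl]
  calc ‖schrodingerCocycle v n N‖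
      = ‖schrodingerCocycle v n (N % p) * schrodingerCocycle v n p ^ (N / p)‖ := by
        rw [← schrodingerCocycle_add_mul_period hv, Nat.mod_add_div']
    _ ≤ ‖schrodingerCocycle v n (N % p)‖ * ‖schrodingerCocycle v n p ^ (N / p)‖ := norm_mul_le _ _
    _ ≤ C * (1 + N * (C + 1)) := by
        gcongr
        exact hC _ (Nat.mod_lt N hp).le
    _ = C + C * (C + 1) * N := by ring

theorem continuous_schrodingerCocycle {X R : Type*} [TopologicalSpace X] [CommRing R]
    [TopologicalSpace R] [IsTopologicalRing R] {v : X → ℤ → R}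
    (hv : ∀ n, Continuous fun x => v x n) (n : ℤ) (k : ℕ) :
    Continuous fun x => schrodingerCocycle (v x) n k := by
  induction k with
  | zero => exact continuous_const
  | succ k ih =>
    refine Continuous.matrix_mul (continuous_matrix fun i j => ?_) ih
    fin_cases i <;> fin_cases j <;> simp [schrodingerStep, continuous_const, hv]

theorem exists_norm_schrodingerCocycle_le_of_isCompact {X : Type*} [TopologicalSpace X] {K : Set X}
    (hK : IsCompact K) {v : X → ℤ → ℝ} (hv : ∀ n, Continuous fun x => v x n) (n : ℤ) (p : ℕ) :
    ∃ C, ∀ x ∈ K, ∀ r ≤ p, ‖schrodingerCocycle (v x) n r‖ ≤ C := by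
  have hcont : Continuous fun x => ∑ r ∈ Finset.range (p + 1), ‖schrodingerCocycle (v x) n r‖ :=
    continuous_finsetSum _ fun r _ => (continuous_schrodingerCocycle hv n r).norm
  obtain ⟨C, hC⟩ := hK.bddAbove_image hcont.continuousOn
  refine ⟨C, fun x hx r hr => ?_⟩
  calc ‖schrodingerCocycle (v x) n r‖
      ≤ ∑ r ∈ Finset.range (p + 1), ‖schrodingerCocycle (v x) n r‖ :=
        Finset.single_le_sum (f := fun r => ‖schrodingerCocycle (v x) n r‖)
          (fun _ _ => norm_nonneg _) (Finset.mem_range_succ_iff.mpr hr)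
    _ ≤ C := hC (Set.mem_image_of_mem _ hx)

theorem schrodingerCocycle_eq_prod {R : Type*} [CommRing R] (v : ℤ → R) (n : ℤ) (k : ℕ) :
    schrodingerCocycle v n k =
      ((List.range k).map fun j : ℕ => schrodingerStep (v (n + (k - (j + 1))))).prod := by
  induction k with
  | zero => rfl
  | succ k ih =>
    rw [schrodingerCocycle_succ, ih, List.range_succ_eq_map, List.map_cons, List.prod_cons,
      List.map_map]
    congr 2
    · simp
    · congr 1
      funext j
      simp only [Function.comp_apply, Nat.cast_succ, add_sub_add_right_eq_sub]

theorem transferMatrix_eq_schrodingerCocycle (V : ℤ → ℝ) (E : ℝ) (N : ℕ) :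
    transferMatrix V E N = schrodingerCocycle (fun n => E - V n) 0 N := by
  -- The bound variable of `transferMatrix` is an integer, so `List.range N` is coerced to `List ℤ`.
  have hcast : (do let n ← List.range N; pure (n : ℤ) : List ℤ) = (List.range N).map (↑) :=
    List.flatMap_pure_eq_map _ _
  rw [transferMatrix, hcast, schrodingerCocycle_eq_prod, List.map_map]
  simp only [zero_add, schrodingerStep, Function.comp_def]

theorem opNorm_eq_norm (A : Matrix (Fin 2) (Fin 2) ℝ) : opNorm A = ‖A‖ := rfl

theorem logNormRate_le_of_opNorm_le_exp {V : ℤ → ℝ} {E μ : ℝ} {N : ℕ} (hμ : 0 ≤ μ)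
    (h : opNorm (transferMatrix V E N) ≤ Real.exp (μ * N)) : logNormRate V E N ≤ μ := by
  have hpos : 0 < opNorm (transferMatrix V E N) := by
    have hdet := det_schrodingerCocycle (fun n => E - V n) 0 N
    rw [opNorm_eq_norm, norm_pos_iff, transferMatrix_eq_schrodingerCocycle]
    intro hzero
    simp [hzero] at hdet
  rw [logNormRate, one_div_mul_eq_div]
  exact div_le_of_le_mul₀ N.cast_nonneg hμ ((Real.log_le_iff_le_exp hpos).mpr h)

theorem eventually_affine_le_exp_mul (a b : ℝ) {μ : ℝ} (hμ : 0 < μ) :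
    ∀ᶠ x : ℝ in atTop, a + b * x ≤ Real.exp (μ * x) := by
  have hlin : (fun x : ℝ => a + b * x) =o[atTop] fun x => Real.exp (μ * x) := by
    simpa using ((isLittleO_pow_exp_pos_mul_atTop 0 hμ).const_mul_left a).add
      ((isLittleO_pow_exp_pos_mul_atTop 1 hμ).const_mul_left b)
  filter_upwards [hlin.bound one_pos] with x hx
  simpa using (le_abs_self _).trans hx

end Growth

/-- for a periodic potential, the normalized transfer-matrix growth is
uniformly small on the spectrum for all large `N`. -/
theorem statement8 (V : ℤ → ℝ) (p : ℕ) (hp : 1 ≤ p) (hper : IsPeriodic V p)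
    (H : lp (fun _ : ℤ => ℂ) 2 →L[ℂ] lp (fun _ : ℤ => ℂ) 2)
    (hH : IsSchrodingerOp V H) :
    ∀ μ : ℝ, 0 < μ → ∃ M : ℕ, ∀ E : ℝ, (E : ℂ) ∈ spectrum ℂ H →
      ∀ N : ℕ, M ≤ N → logNormRate V E N ≤ μ := by
  intro μ hμ
  have hspec {E : ℝ} (hE : (E : ℂ) ∈ spectrum ℂ H) : E ∈ spectrum ℝ H := by
    rwa [← spectrum.preimage_algebraMap ℂ]
  obtain ⟨C, hC⟩ := exists_norm_schrodingerCocycle_le_of_isCompact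
    (spectrum.isCompact (𝕜 := ℝ) H) (fun n => continuous_sub_right (V n)) 0 p
  obtain ⟨M, hM⟩ := eventually_atTop.mp <|
    tendsto_natCast_atTop_atTop.eventually (eventually_affine_le_exp_mul C (C * (C + 1)) hμ)
  refine ⟨M, fun E hE N hN => logNormRate_le_of_opNorm_le_exp hμ.le ?_⟩
  have hv : Function.Periodic (fun n => E - V n) (p : ℤ) := Function.Periodic.comp hper (E - ·)
  have htrace := abs_trace_schrodingerCocycle_le_two hper hH (hspec hE)
  rw [opNorm_eq_norm, transferMatrix_eq_schrodingerCocycle]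
  exact (norm_schrodingerCocycle_le hp hv htrace (hC E (hspec hE)) N).trans (hM N hN)
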